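/- arXiv:1109.2824 — 2 statements merged into one kernel-verified Lean document; each statement's English description precedes it below -/
import Mathlib

section
/- Let φ : Γ₁ → Γ₂ be a finite flat morphism between graphs and let R' be a cycle in Γ₂. Then there exist a cycle R in Γ₁ and an integer d ≥ 1 such that the closed walk φ(R) (obtained by applying φ_E to the edges of R) coincides, up to cyclic rotation, with the closed walk obtained by traversing R' d consecutive times. -/
/-- A graph: a finite directed multigraph with a fixed-point-free orientation-reversing
involution `bar` on the set of oriented edges. -/
structure InvGraph where
  V : Type
  E : Type
  [fintV : Fintype V]
  [fintE : Fintype E]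
  [decV : DecidableEq V]
  [decE : DecidableEq E]
  s : E → V
  t : E → V
  bar : E → E
  bar_ne : ∀ e, bar e ≠ e
  bar_bar : ∀ e, bar (bar e) = e
  s_bar : ∀ e, s (bar e) = t e
  t_bar : ∀ e, t (bar e) = s e

attribute [instance] InvGraph.fintV InvGraph.fintE InvGraph.decV InvGraph.decE

/-- `V(Γ,F)`: the `F`-vector space with basis the vertices of `Γ`. -/
abbrev InvGraph.VVec (Γ : InvGraph) (F : Type) [Field F] : Type := Γ.V → F

/-- The subspace of relations `ē = -e`, i.e. spanned by the elements `e + ē`. -/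
def InvGraph.rel (Γ : InvGraph) (F : Type) [Field F] : Submodule F (Γ.E → F) :=
  Submodule.span F {x | ∃ e : Γ.E, x = Pi.single e 1 + Pi.single (Γ.bar e) 1}

/-- `E(Γ,F)`: the quotient of the `F`-vector space with basis the oriented edges of `Γ`
by the relations `ē = -e`. -/
abbrev InvGraph.EVec (Γ : InvGraph) (F : Type) [Field F] : Type := (Γ.E → F) ⧸ Γ.rel F

/-- The class of an oriented edge `e` in `E(Γ,F)`. -/
def InvGraph.edgeCls (Γ : InvGraph) (F : Type) [Field F] (e : Γ.E) : Γ.EVec F :=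
  Submodule.Quotient.mk (Pi.single e 1)

/-- The boundary map on the free module: `e ↦ t(e) - s(e)`. -/
def InvGraph.d0 (Γ : InvGraph) (F : Type) [Field F] : (Γ.E → F) →ₗ[F] Γ.VVec F :=
  ∑ e : Γ.E, (LinearMap.proj e : (Γ.E → F) →ₗ[F] F).smulRight
    (Pi.single (Γ.t e) 1 - Pi.single (Γ.s e) 1)

lemma InvGraph.d0_single (Γ : InvGraph) (F : Type) [Field F] (e : Γ.E) :
    Γ.d0 F (Pi.single e 1) = Pi.single (Γ.t e) 1 - Pi.single (Γ.s e) 1 := by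
  classical
  simp only [InvGraph.d0, LinearMap.sum_apply, LinearMap.smulRight_apply, LinearMap.proj_apply]
  rw [Finset.sum_eq_single e]
  · simp
  · intro b _ hb
    rw [Pi.single_eq_of_ne hb, zero_smul]
  · simp

/-- The map `d : E(Γ,F) → V(Γ,F)`, `e ↦ t(e) - s(e)`. -/
def InvGraph.dMap (Γ : InvGraph) (F : Type) [Field F] : Γ.EVec F →ₗ[F] Γ.VVec F :=
  Submodule.liftQ (Γ.rel F) (Γ.d0 F) (by
    rw [InvGraph.rel, Submodule.span_le]
    rintro x ⟨e, rfl⟩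
    simp only [SetLike.mem_coe, LinearMap.mem_ker, map_add, InvGraph.d0_single,
      Γ.s_bar, Γ.t_bar]
    abel)

lemma InvGraph.dMap_edgeCls (Γ : InvGraph) (F : Type) [Field F] (e : Γ.E) :
    Γ.dMap F (Γ.edgeCls F e) = Pi.single (Γ.t e) 1 - Pi.single (Γ.s e) 1 := by
  simpa [InvGraph.dMap, InvGraph.edgeCls] using Γ.d0_single F e

/-- The map `δ : V(Γ,F) → E(Γ,F)`, `v ↦ ∑_{e : t(e) = v} e`
(the class of the function `e ↦ g (t e)` for `g ∈ V(Γ,F)`). -/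
def InvGraph.deltaMap (Γ : InvGraph) (F : Type) [Field F] : Γ.VVec F →ₗ[F] Γ.EVec F :=
  (Γ.rel F).mkQ ∘ₗ LinearMap.funLeft F F Γ.t

lemma InvGraph.deltaMap_single (Γ : InvGraph) (F : Type) [Field F] (v : Γ.V) :
    Γ.deltaMap F (Pi.single v 1) =
      ∑ e ∈ Finset.univ.filter (fun e => Γ.t e = v), Γ.edgeCls F e := by
  classical
  simp only [InvGraph.deltaMap, LinearMap.coe_comp, Function.comp_apply, InvGraph.edgeCls,
    ← Submodule.mkQ_apply]
  rw [← map_sum]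
  congr 1
  funext e
  rw [Finset.sum_apply, Finset.sum_filter]
  simp only [LinearMap.funLeft_apply]
  have key : ∀ e' : Γ.E, (if Γ.t e' = v then ((Pi.single e' (1:F) : Γ.E → F) e) else 0)
      = (if e' = e then (if Γ.t e = v then (1:F) else 0) else 0) := by
    intro e'
    by_cases h1 : e' = e <;> by_cases h2 : Γ.t e' = v <;> simp_all [Pi.single_apply]
  rw [Finset.sum_congr rfl (fun e' _ => key e'),
    Finset.sum_ite_eq' Finset.univ e (fun _ => if Γ.t e = v then (1:F) else 0)]
  simp [Pi.single_apply]
/-- A cycle in a graph `Γ`: a nonempty closed walk, encoded as a cyclically indexed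
sequence of oriented edges `seq : ZMod len → Γ.E` with `t (seq i) = s (seq (i+1))`. -/
structure GraphCycle (Γ : InvGraph) where
  len : ℕ
  len_pos : 0 < len
  seq : ZMod len → Γ.E
  closed : ∀ i, Γ.t (seq i) = Γ.s (seq (i + 1))

/-- The class `e₁ + ⋯ + e_m ∈ E(Γ,F)` of a cycle. -/
def GraphCycle.cls {Γ : InvGraph} (R : GraphCycle Γ) (F : Type) [Field F] : Γ.EVec F :=
  haveI : NeZero R.len := ⟨R.len_pos.ne'⟩
  ∑ i : ZMod R.len, Γ.edgeCls F (R.seq i)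

/-- The multiplicity `m_R(e)`: the number of times the cycle `R` traverses the
oriented edge `e`. -/
def GraphCycle.mult {Γ : InvGraph} (R : GraphCycle Γ) (e : Γ.E) : ℕ :=
  haveI : NeZero R.len := ⟨R.len_pos.ne'⟩
  (Finset.univ.filter (fun i : ZMod R.len => R.seq i = e)).card

/-- The set of oriented edges traversed by a cycle. -/
def GraphCycle.edgeSet {Γ : InvGraph} (R : GraphCycle Γ) : Set Γ.E :=
  {e | ∃ i, R.seq i = e}

/-- The set of vertices visited by a cycle. -/
def GraphCycle.vertexSet {Γ : InvGraph} (R : GraphCycle Γ) : Set Γ.V :=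
  {v | ∃ i, Γ.s (R.seq i) = v}

/-- The cycle obtained by traversing `R` `d` consecutive times. -/
def GraphCycle.pow {Γ : InvGraph} (R : GraphCycle Γ) (d : ℕ) (hd : 0 < d) : GraphCycle Γ where
  len := d * R.len
  len_pos := Nat.mul_pos hd R.len_pos
  seq := fun i => R.seq (ZMod.castHom (dvd_mul_left R.len d) (ZMod R.len) i)
  closed := fun i => by rw [map_add, map_one]; exact R.closed _

/-- Two cycles coincide up to cyclic rotation. -/
def CyclicRotation {Γ : InvGraph} (C D : GraphCycle Γ) : Prop :=
  C.len = D.len ∧ ∃ k : ℕ, ∀ j : ℕ, C.seq (j : ZMod C.len) = D.seq ((j + k : ℕ) : ZMod D.len)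

/-- A finite flat morphism of degree `n` between graphs. -/
structure FFMor (Γ₁ Γ₂ : InvGraph) (n : ℕ) where
  vMap : Γ₁.V → Γ₂.V
  eMap : Γ₁.E → Γ₂.E
  vMap_surj : Function.Surjective vMap
  eMap_surj : Function.Surjective eMap
  s_comm : ∀ e, vMap (Γ₁.s e) = Γ₂.s (eMap e)
  t_comm : ∀ e, vMap (Γ₁.t e) = Γ₂.t (eMap e)
  bar_comm : ∀ e, eMap (Γ₁.bar e) = Γ₂.bar (eMap e)
  vMult : Γ₁.V → ℕ
  eMult : Γ₁.E → ℕ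
  vMult_pos : ∀ v, 0 < vMult v
  eMult_pos : ∀ e, 0 < eMult e
  eMult_bar : ∀ e, eMult (Γ₁.bar e) = eMult e
  fiber_s_surj : ∀ e' : Γ₂.E, ∀ v : Γ₁.V, vMap v = Γ₂.s e' →
    ∃ e : Γ₁.E, eMap e = e' ∧ Γ₁.s e = v
  sum_fiber : ∀ e' : Γ₂.E,
    ∑ e ∈ Finset.univ.filter (fun e => eMap e = e'), eMult e = n
  sum_fiber_source : ∀ e' : Γ₂.E, ∀ v : Γ₁.V, vMap v = Γ₂.s e' →
    ∑ e ∈ Finset.univ.filter (fun e => eMap e = e' ∧ Γ₁.s e = v), eMult e = vMult v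

/-- The image closed walk `φ(R)` of a cycle `R` under a finite flat morphism `φ`. -/
def FFMor.mapCycle {Γ₁ Γ₂ : InvGraph} {n : ℕ} (φ : FFMor Γ₁ Γ₂ n) (R : GraphCycle Γ₁) :
    GraphCycle Γ₂ where
  len := R.len
  len_pos := R.len_pos
  seq := fun i => φ.eMap (R.seq i)
  closed := fun i => by rw [← φ.t_comm, R.closed, φ.s_comm]
/-- Every cycle in the target of a finite flat morphism lifts to an infinite walk that traverses
it repeatedly. -/
lemma FFMor.exists_lift_walk {Γ₁ Γ₂ : InvGraph} {n : ℕ} (φ : FFMor Γ₁ Γ₂ n)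
    (R' : GraphCycle Γ₂) :
    ∃ w : ℕ → Γ₁.E, (∀ j : ℕ, φ.eMap (w j) = R'.seq j) ∧
      ∀ j : ℕ, Γ₁.t (w j) = Γ₁.s (w (j + 1)) := by
  have step : ∀ (x : Γ₁.E) (i : ZMod R'.len), ∃ y : Γ₁.E, φ.eMap x = R'.seq i →
      φ.eMap y = R'.seq (i + 1) ∧ Γ₁.s y = Γ₁.t x := by
    intro x i
    by_cases hx : φ.eMap x = R'.seq i
    · obtain ⟨y, hy⟩ := φ.fiber_s_surj (R'.seq (i + 1)) (Γ₁.t x)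
        (by rw [φ.t_comm, hx, R'.closed])
      exact ⟨y, fun _ => hy⟩
    · exact ⟨x, fun h => absurd h hx⟩
  choose next hnext using step
  obtain ⟨x₀, hx₀⟩ := φ.eMap_surj (R'.seq 0)
  let w : ℕ → Γ₁.E := fun j => Nat.rec x₀ (fun j x => next x j) j
  have hw : ∀ j : ℕ, φ.eMap (w j) = R'.seq j := by
    intro j
    induction j with
    | zero => simpa [w] using hx₀
    | succ j ih => simpa using (hnext (w j) j ih).1
  exact ⟨w, hw, fun j => (hnext (w j) j (hw j)).2.symm⟩

/-- A stretch of a walk after which the walk is back at the same edge closes up to a cycle. -/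
def GraphCycle.ofWalk {Γ : InvGraph} (w : ℕ → Γ.E) (hw : ∀ j, Γ.t (w j) = Γ.s (w (j + 1)))
    (a l : ℕ) (hl : 0 < l) (hal : w (a + l) = w a) : GraphCycle Γ where
  len := l
  len_pos := hl
  seq := fun i => w (a + i.val)
  closed := fun i => by
    have : NeZero l := ⟨hl.ne'⟩
    rw [hw, add_assoc]
    rcases (Nat.succ_le_of_lt i.val_lt).lt_or_eq with h | h
    · have hi : i + 1 = ((i.val + 1 : ℕ) : ZMod l) := by
        rw [Nat.cast_succ, ZMod.natCast_zmod_val]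
      rw [hi, ZMod.val_natCast_of_lt h]
    · have hi : i + 1 = 0 := by
        rw [← ZMod.natCast_zmod_val i, ← Nat.cast_succ, h, ZMod.natCast_self]
      rw [hi, ZMod.val_zero, ← Nat.succ_eq_add_one, h, hal, add_zero]

/-- for a finite flat morphism `φ : Γ₁ → Γ₂` and a cycle `R'` in `Γ₂`,
there exist a cycle `R` in `Γ₁` and an integer `d ≥ 1` such that `φ(R)` coincides, up
to cyclic rotation, with `R'` traversed `d` consecutive times. -/
theorem statement5 (Γ₁ Γ₂ : InvGraph) (n : ℕ) (φ : FFMor Γ₁ Γ₂ n) (R' : GraphCycle Γ₂) :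
    ∃ (R : GraphCycle Γ₁) (d : ℕ) (hd : 0 < d),
      CyclicRotation (φ.mapCycle R) (R'.pow d hd) := by
  obtain ⟨w, hφ, hw⟩ := φ.exists_lift_walk R'
  obtain ⟨a, b, hab, heq⟩ : ∃ a b : ℕ, a < b ∧ w (a * R'.len) = w (b * R'.len) := by
    obtain ⟨a, b, hne, heq⟩ :=
      Finite.exists_ne_map_eq_of_infinite fun j : ℕ => w (j * R'.len)
    rcases hne.lt_or_gt with h | h
    · exact ⟨a, b, h, heq⟩
    · exact ⟨b, a, h, heq.symm⟩
  have hd : 0 < b - a := Nat.sub_pos_of_lt hab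
  have hlen : w (a * R'.len + (b - a) * R'.len) = w (a * R'.len) := by
    rw [← add_mul, Nat.add_sub_cancel' hab.le, heq]
  refine ⟨GraphCycle.ofWalk w hw (a * R'.len) ((b - a) * R'.len)
    (Nat.mul_pos hd R'.len_pos) hlen, b - a, hd, rfl, 0, fun j => ?_⟩
  change φ.eMap (w (a * R'.len + (j : ZMod ((b - a) * R'.len)).val)) =
    R'.seq (ZMod.castHom (dvd_mul_left R'.len (b - a)) (ZMod R'.len)
      ((j + 0 : ℕ) : ZMod ((b - a) * R'.len)))
  rw [hφ, add_zero, map_natCast, ZMod.val_natCast, Nat.cast_add, Nat.cast_mul,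
    ZMod.natCast_self, mul_zero, zero_add]
  exact congrArg R'.seq ((ZMod.natCast_eq_natCast_iff _ _ _).2
    ((Nat.mod_modEq j _).of_dvd (dvd_mul_left _ _)))
end

section
/- (Pullback of cycles, existence.) Let φ : Γ₁ → Γ₂ be a finite flat morphism of degree n between graphs, with multiplicities n_e (e ∈ E(Γ₁)), and let R' be a cycle in Γ₂. Then there exist cycles R₁, …, R_m in Γ₁ such that: (1) for each i, the closed walk φ(R_i) coincides, up to cyclic rotation, with the cycle R' traversed d_i consecutive times for some integer d_i ≥ 1; and (2) for every oriented edge e ∈ E(Γ₁), the total number of traversals Σ_{i=1}^m m_{R_i}(e) equals n_e · m_{R'}(φ_E(e)). (In the case where R' and all the R_i traverse each oriented edge at most once, condition (2) says exactly that for every e with φ_E(e) ∈ E(R'), the number of indices i with e ∈ E(R_i) equals n_e.) -/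
/-- Two maps out of a finite type with equinumerous fibres differ by a permutation of the source. -/
lemma exists_perm_comp_eq {X Y : Type*} [Fintype X] [DecidableEq Y] (a b : X → Y)
    (h : ∀ y, (Finset.univ.filter fun x => a x = y).card =
      (Finset.univ.filter fun x => b x = y).card) :
    ∃ σ : Equiv.Perm X, ∀ x, b (σ x) = a x := by
  have e : ∀ y, {x // a x = y} ≃ {x // b x = y} := fun y =>
    Fintype.equivOfCardEq (by rw [Fintype.card_subtype, Fintype.card_subtype, h])
  refine ⟨(Equiv.sigmaFiberEquiv a).symm.trans
    ((Equiv.sigmaCongrRight e).trans (Equiv.sigmaFiberEquiv b)), fun x => ?_⟩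
  exact (e (a x) ⟨x, rfl⟩).2

/-- The cycle decomposition of a permutation of a finite type, with each cycle indexed by the
residues modulo its length. -/
lemma exists_sigma_zmod_equiv {X : Type*} [Finite X] (σ : Equiv.Perm X) :
    ∃ (m : ℕ) (p : Fin m → ℕ) (f : (Σ i, ZMod (p i)) ≃ X),
      (∀ i, 0 < p i) ∧ ∀ i j, f ⟨i, j + 1⟩ = σ (f ⟨i, j⟩) := by
  classical
  let Q := Quotient (MulAction.orbitRel (Subgroup.zpowers σ) X)
  have : Fintype Q := Fintype.ofFinite Q
  let g := (Fintype.equivFin Q).symm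
  let p : Q → ℕ := fun q => Function.minimalPeriod (σ • ·) q.out
  let F : (Σ q : Q, ZMod (p q)) ≃ X :=
    (Equiv.sigmaCongrRight fun q : Q => (MulAction.orbitZPowersEquiv σ q.out).symm).trans
      (MulAction.selfEquivSigmaOrbits (Subgroup.zpowers σ) X).symm
  refine ⟨Fintype.card Q, p ∘ g, (Equiv.sigmaCongrLeft (β := fun q => ZMod (p q)) g).trans F,
    fun i => ?_, fun i j => ?_⟩
  · exact Function.minimalPeriod_pos_of_mem_periodicPts
      (Function.Injective.mem_periodicPts σ.injective _)
  · have hF : ∀ q (k : ZMod (p q)), F ⟨q, k⟩ = (σ ^ (k.cast : ℤ)) q.out := fun q k => rfl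
    obtain ⟨k, rfl⟩ := ZMod.intCast_surjective j
    have hF' : ∀ q (k : ℤ), F ⟨q, k⟩ = (σ ^ k) q.out := fun q k => by
      rw [hF, ZMod.coe_intCast]
      exact MulAction.zpow_smul_mod_minimalPeriod σ q.out k
    have hstep : F ⟨g i, (k : ZMod (p (g i))) + 1⟩ = σ (F ⟨g i, (k : ZMod (p (g i)))⟩) := by
      rw [hF', ← Int.cast_one, ← Int.cast_add, hF', add_comm, zpow_one_add, Equiv.Perm.mul_apply]
    exact hstep

namespace FFMor

variable {Γ₁ Γ₂ : InvGraph} {n : ℕ} (φ : FFMor Γ₁ Γ₂ n)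

/-- The multiplicities of the edges over `e'` with target `v` add up to the multiplicity of `v`. -/
lemma sum_fiber_target (e' : Γ₂.E) (v : Γ₁.V) (hv : φ.vMap v = Γ₂.t e') :
    ∑ e ∈ Finset.univ.filter (fun e => φ.eMap e = e' ∧ Γ₁.t e = v), φ.eMult e =
      φ.vMult v := by
  rw [← φ.sum_fiber_source (Γ₂.bar e') v (by rw [hv, Γ₂.s_bar])]
  refine Finset.sum_nbij' Γ₁.bar Γ₁.bar ?_ ?_ ?_ ?_ ?_
  · simp only [Finset.mem_filter, Finset.mem_univ, true_and]
    rintro e ⟨rfl, rfl⟩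
    exact ⟨φ.bar_comm e, Γ₁.s_bar e⟩
  · simp only [Finset.mem_filter, Finset.mem_univ, true_and]
    rintro e ⟨he, rfl⟩
    exact ⟨by rw [φ.bar_comm, he, Γ₂.bar_bar], Γ₁.t_bar e⟩
  · exact fun e _ => Γ₁.bar_bar e
  · exact fun e _ => Γ₁.bar_bar e
  · exact fun e _ => (φ.eMult_bar e).symm

/-- The lifts of the steps of the cycle `R'`, each edge `e` being counted `n_e` times. -/
abbrev Lift (R' : GraphCycle Γ₂) : Type :=
  Σ q : {q : ZMod R'.len × Γ₁.E // φ.eMap q.2 = R'.seq q.1}, Fin (φ.eMult q.1.2)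

lemma card_filter_lift (R' : GraphCycle Γ₂) [NeZero R'.len]
    (P : ZMod R'.len → Γ₁.E → Prop) [∀ i e, Decidable (P i e)] :
    (Finset.univ.filter fun x : φ.Lift R' => P x.1.1.1 x.1.1.2).card =
      ∑ i, ∑ e ∈ Finset.univ.filter (fun e => φ.eMap e = R'.seq i ∧ P i e), φ.eMult e := by
  rw [Finset.card_filter, Fintype.sum_sigma]
  have hfin : ∀ q : {q : ZMod R'.len × Γ₁.E // φ.eMap q.2 = R'.seq q.1},
      (∑ _k : Fin (φ.eMult q.1.2), if P q.1.1 q.1.2 then 1 else 0) =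
        if P q.1.1 q.1.2 then φ.eMult q.1.2 else 0 := fun q => by simp
  rw [Finset.sum_congr rfl fun q _ => hfin q,
    ← Finset.sum_subtype (Finset.univ.filter fun q : ZMod R'.len × Γ₁.E =>
      φ.eMap q.2 = R'.seq q.1) (by simp)
      (fun q => if P q.1 q.2 then φ.eMult q.2 else 0), Finset.sum_filter, Fintype.sum_prod_type]
  refine Finset.sum_congr rfl fun i _ => ?_
  rw [Finset.sum_filter]
  exact Finset.sum_congr rfl fun e _ => by rw [ite_and]

/-- The lifts of the steps of `R'` can be permuted so that each is followed by a lift of the next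
step which starts where it ends. -/
lemma exists_perm_lift (R' : GraphCycle Γ₂) :
    ∃ σ : Equiv.Perm (φ.Lift R'), ∀ x,
      (σ x).1.1.1 = x.1.1.1 + 1 ∧ Γ₁.s (σ x).1.1.2 = Γ₁.t x.1.1.2 := by
  have : NeZero R'.len := ⟨R'.len_pos.ne'⟩
  obtain ⟨σ, hσ⟩ := exists_perm_comp_eq
    (fun x : φ.Lift R' => (x.1.1.1 + 1, Γ₁.t x.1.1.2))
    (fun x : φ.Lift R' => (x.1.1.1, Γ₁.s x.1.1.2)) (by
      rintro ⟨i, v⟩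
      simp only [Prod.mk.injEq]
      rw [φ.card_filter_lift R' fun k e => k + 1 = i ∧ Γ₁.t e = v,
        φ.card_filter_lift R' fun k e => k = i ∧ Γ₁.s e = v,
        Finset.sum_eq_single (i - 1), Finset.sum_eq_single i]
      · have hi : Γ₂.t (R'.seq (i - 1)) = Γ₂.s (R'.seq i) := by
          rw [R'.closed, sub_add_cancel]
        simp only [sub_add_cancel, true_and]
        by_cases hv : φ.vMap v = Γ₂.s (R'.seq i)
        · rw [φ.sum_fiber_source _ v hv, φ.sum_fiber_target _ v (hv.trans hi.symm)]
        · rw [Finset.sum_eq_zero, Finset.sum_eq_zero]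
          · rintro e he
            obtain ⟨h, rfl⟩ := (Finset.mem_filter.1 he).2
            exact absurd (by rw [φ.s_comm, h]) hv
          · rintro e he
            obtain ⟨h, rfl⟩ := (Finset.mem_filter.1 he).2
            exact absurd (by rw [φ.t_comm, h, hi]) hv
      · intro k _ hk
        simp [hk]
      · simp
      · intro k _ hk
        simp [← eq_sub_iff_add_eq, hk]
      · simp)
  exact ⟨σ, fun x => Prod.mk.inj (hσ x)⟩

end FFMor

/-- pullback of cycles, existence: for a finite flat morphism
`φ : Γ₁ → Γ₂` of degree `n` with multiplicities `n_e` and a cycle `R'` in `Γ₂`, there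
are cycles `R₁, …, R_m` in `Γ₁` such that (1) each `φ(Rᵢ)` coincides up to cyclic
rotation with `R'` traversed `dᵢ ≥ 1` consecutive times, and (2) for every oriented
edge `e` of `Γ₁`, `∑ᵢ m_{Rᵢ}(e) = n_e · m_{R'}(φ_E(e))`. -/
theorem statement6 (Γ₁ Γ₂ : InvGraph) (n : ℕ) (φ : FFMor Γ₁ Γ₂ n) (R' : GraphCycle Γ₂) :
    ∃ (m : ℕ) (Rs : Fin m → GraphCycle Γ₁),
      (∀ i : Fin m, ∃ (d : ℕ) (hd : 0 < d),
        CyclicRotation (φ.mapCycle (Rs i)) (R'.pow d hd)) ∧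
      (∀ e : Γ₁.E, ∑ i : Fin m, (Rs i).mult e = φ.eMult e * R'.mult (φ.eMap e)) := by
  classical
  have : NeZero R'.len := ⟨R'.len_pos.ne'⟩
  obtain ⟨σ, hσ⟩ := φ.exists_perm_lift R'
  obtain ⟨m, p, f, hp, hf⟩ := exists_sigma_zmod_equiv σ
  refine ⟨m, fun i => ⟨p i, hp i, fun j => (f ⟨i, j⟩).1.1.2, fun j => ?_⟩, fun i => ?_, fun e => ?_⟩
  · rw [hf, (hσ _).2]
  · have hpos : ∀ j : ℕ, (f ⟨i, (j : ZMod (p i))⟩).1.1.1 = j + (f ⟨i, 0⟩).1.1.1 := by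
      intro j
      induction j with
      | zero => simp
      | succ j ih => rw [Nat.cast_succ, hf, (hσ _).1, ih, Nat.cast_succ]; ring
    have hdvd : R'.len ∣ p i := by
      have h := hpos (p i)
      rw [ZMod.natCast_self, right_eq_add] at h
      exact (ZMod.natCast_eq_zero_iff _ _).1 h
    refine ⟨p i / R'.len, Nat.div_pos (Nat.le_of_dvd (hp i) hdvd) R'.len_pos,
      (Nat.div_mul_cancel hdvd).symm, (f ⟨i, 0⟩).1.1.1.val, fun j => ?_⟩
    refine (f ⟨i, (j : ZMod (p i))⟩).1.2.trans ?_
    refine congrArg R'.seq (Eq.trans ?_ (map_natCast _ _).symm)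
    rw [hpos, Nat.cast_add, ZMod.natCast_zmod_val]
  · have : ∀ i, NeZero (p i) := fun i => ⟨(hp i).ne'⟩
    have hcount : (Finset.univ.filter fun x : φ.Lift R' => x.1.1.2 = e).card =
        φ.eMult e * R'.mult (φ.eMap e) := by
      rw [φ.card_filter_lift R' fun _ e' => e' = e, GraphCycle.mult, Finset.card_filter,
        Finset.mul_sum]
      refine Finset.sum_congr rfl fun i _ => ?_
      rw [Finset.sum_filter, Finset.sum_eq_single e]
      · simp [eq_comm]
      · intro e' _ he'
        simp [he']
      · simp
    rw [← hcount, Finset.card_filter, ← f.sum_comp, Fintype.sum_sigma]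
    refine Finset.sum_congr rfl fun i _ => ?_
    rw [GraphCycle.mult, Finset.card_filter]
end
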